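/- Let N₁, N₂, m, r be positive integers and let γ ≥ 1 be a real number. Set s := 100·γ⁴·r and t := 800·γ¹²·s, and assume t + s + r ≤ min{N₁, N₂}. Suppose the linear map 𝓐 : ℝ^{N₁×N₂} → ℝ^m satisfies the modified rank-restricted isometry property of order t + s + r with constants 0 < α ≤ β such that β/α ≤ γ. Let X ∈ ℝ^{N₁×N₂}, e ∈ ℝ^m, and y := 𝓐(X) + e. Let (Xₙ)_{n≥0} be any sequence of matrices such that X₀ = 0 and, for every n ≥ 0, there is a matrix Wₙ which is a best rank-t approximation of 𝓐*(sgn(y − 𝓐(Xₙ))) such that X_{n+1} is a best rank-s approximation of Xₙ + μₙ·Wₙ, where μₙ := ‖y − 𝓐(Xₙ)‖₁ / max{‖Wₙ‖_F², (1/(4γ²))·‖𝓐(Wₙ)‖₁²/‖Wₙ‖_F²} if Wₙ ≠ 0 and μₙ := 0 otherwise. Then, for every best rank-r approximation X_r of X and every n ≥ 0, one has ‖X_r − Xₙ‖_F ≤ ρⁿ·‖X_r‖_F + d·‖𝓐(X − X_r) + e‖₁, where ρ := 1 − (3 − 2√2)/(10·γ²), ρ' := 1 + √(8r/(s+r)),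 and d := 960·ρ'·γ¹⁰ / ((3 − 2√2)·β). Consequently, every cluster point X♯ of the sequence (Xₙ) satisfies ‖X_r − X♯‖_F ≤ d·‖𝓐(X − X_r) + e‖₁. -/

import Mathlib

noncomputable def frobNorm {N₁ N₂ : ℕ} (Z : Matrix (Fin N₁) (Fin N₂) ℝ) : ℝ :=
  Real.sqrt (∑ i, ∑ j, (Z i j) ^ 2)

def frobInner {N₁ N₂ : ℕ} (A B : Matrix (Fin N₁) (Fin N₂) ℝ) : ℝ :=
  ∑ i, ∑ j, A i j * B i j

def l1norm {m : ℕ} (v : Fin m → ℝ) : ℝ := ∑ i, |v i|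

noncomputable def sgnVec {m : ℕ} (v : Fin m → ℝ) : Fin m → ℝ := fun i => Real.sign (v i)

def IsBestRankApprox {N₁ N₂ : ℕ} (k : ℕ) (Z H : Matrix (Fin N₁) (Fin N₂) ℝ) : Prop :=
  H.rank ≤ k ∧
    ∀ W : Matrix (Fin N₁) (Fin N₂) ℝ, W.rank ≤ k → frobNorm (Z - H) ≤ frobNorm (Z - W)
open scoped Classical

/-!
Put `v = y - 𝓐 Xₙ` and `U = X_r - Xₙ`. The inner product of the subgradient `𝓐*(sgn v)` with `U`
is at least `‖v‖₁ - ‖y - 𝓐 X_r‖₁`. Truncating the subgradient to rank `t` hardly changes it, since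
the error of a best rank-`t` approximation `W` has spectral norm at most `‖W‖_F / √t` and is
therefore nearly orthogonal to matrices whose rank is small compared with `t`, such as `U`. Hence a
step along `W` contracts `‖U‖_F` by `1 - 1/(4γ²)` if the noise `‖y - 𝓐 X_r‖₁` is small compared
with `‖U‖_F`; otherwise `‖U‖_F` is itself of the order of the noise. Hard thresholding to rank
`s ≫ r` increases the distance to a matrix of rank `r` by a factor of at most `1 + 1/(8γ²)`. So one
iteration contracts by `1 - 1/(8γ²)` up to a multiple of the noise, and a geometric series gives
the estimate.

The properties of best low-rank approximations are obtained without singular value decompositions,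
by comparing the minimizer with projections and with exchanges of a single direction.
-/

open Module Submodule
open scoped RealInnerProductSpace

section Subspace

variable {E : Type*} [NormedAddCommGroup E] [InnerProductSpace ℝ E]

theorem finrank_sup_span_singleton_le (S : Submodule ℝ E) [FiniteDimensional ℝ S] (u : E) :
    finrank ℝ ↥(S ⊔ ℝ ∙ u) ≤ finrank ℝ S + 1 := by
  refine (finrank_add_le_finrank_add_finrank S (ℝ ∙ u)).trans ?_
  gcongr
  simpa using finrank_span_le_card (R := ℝ) {u}

theorem finrank_inf_orthogonal_sup_span_singleton_le {S : Submodule ℝ E} [FiniteDimensional ℝ S]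
    {q : E} (hq : q ∈ S) (hq0 : q ≠ 0) (u : E) :
    finrank ℝ ↥(S ⊓ (ℝ ∙ q)ᗮ ⊔ ℝ ∙ u) ≤ finrank ℝ S := by
  have hlt : S ⊓ (ℝ ∙ q)ᗮ < S := by
    refine lt_of_le_of_ne inf_le_left fun heq => hq0 ?_
    have hmem : q ∈ S ⊓ (ℝ ∙ q)ᗮ := heq.symm ▸ hq
    simpa using mem_orthogonal_singleton_iff_inner_right.1 hmem.2
  exact (finrank_sup_span_singleton_le _ u).trans (finrank_lt_finrank_of_lt hlt)

theorem norm_add_smul_sub_smul_sq {q u x : E} (hq : ‖q‖ = 1) (hu : ‖u‖ = 1) (hqu : ⟪q, u⟫ = 0)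
    (hqx : ⟪q, x⟫ = 0) (a : ℝ) :
    ‖x + a • q - ⟪u, x⟫ • u‖ ^ 2 = ‖x‖ ^ 2 + a ^ 2 - ⟪u, x⟫ ^ 2 := by
  rw [norm_sub_sq_real, norm_add_sq_real, inner_add_left]
  simp only [real_inner_smul_left, real_inner_smul_right, norm_smul, hq, hu, hqu,
    real_inner_comm q x ▸ hqx, real_inner_comm u x, mul_pow, Real.norm_eq_abs, sq_abs]
  ring

theorem finrank_le_finrank_add_finrank_inf_orthogonal (S R : Submodule ℝ E)
    [FiniteDimensional ℝ S] [FiniteDimensional ℝ R] :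
    finrank ℝ S ≤ finrank ℝ R + finrank ℝ ↥(S ⊓ Rᗮ) := by
  let f : S →ₗ[ℝ] R := R.orthogonalProjectionOnto.toLinearMap ∘ₗ S.subtype
  have hker : finrank ℝ f.ker = finrank ℝ ↥(S ⊓ Rᗮ) := by
    have : f.ker.map S.subtype = S ⊓ Rᗮ := by
      rw [LinearMap.ker_comp, map_comap_subtype]
      simp
    rw [← this, finrank_map_subtype_eq]
  rw [← f.finrank_range_add_finrank_ker, hker]
  gcongr
  exact finrank_le _

end Subspace

theorem one_div_mul_sq_le {c γ : ℝ} (hc : 0 < c) (hγ : 1 ≤ γ) : 1 / (c * γ ^ 2) ≤ 1 / c := by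
  gcongr
  exact le_mul_of_one_le_right hc.le (one_le_pow₀ hγ)

theorem le_pow_mul_add_of_le_mul_add {u : ℕ → ℝ} {ρ D : ℝ} (hρ : 0 ≤ ρ) (hD : 0 ≤ D)
    (hu : ∀ n, u (n + 1) ≤ ρ * u n + (1 - ρ) * D) (n : ℕ) : u n ≤ ρ ^ n * u 0 + D := by
  induction n with
  | zero => simpa using hD
  | succ n ih =>
    calc u (n + 1) ≤ ρ * u n + (1 - ρ) * D := hu n
      _ ≤ ρ * (ρ ^ n * u 0 + D) + (1 - ρ) * D := by gcongr
      _ = ρ ^ (n + 1) * u 0 + D := by ring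

theorem le_of_mapClusterPt_of_tendsto {X : Type*} [TopologicalSpace X] {x : ℕ → X} {a : X}
    {f : X → ℝ} {b : ℕ → ℝ} {D : ℝ} (ha : MapClusterPt a Filter.atTop x) (hf : ContinuousAt f a)
    (hle : ∀ n, f (x n) ≤ b n) (hb : Filter.Tendsto b Filter.atTop (nhds D)) : f a ≤ D := by
  by_contra! hlt
  obtain ⟨c, hDc, hca⟩ := exists_between hlt
  obtain ⟨n, hn, hbn⟩ := ((ha.continuousAt_comp hf).frequently (lt_mem_nhds hca)).and_eventually
    (hb.eventually_lt_const hDc) |>.exists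
  exact (hn.trans_le (hle n)).not_gt hbn

theorem matrix_rank_sub_le {m n K : Type*} [Fintype n] [Field K] (Y Z : Matrix m n K) :
    (Y - Z).rank ≤ Y.rank + Z.rank := by
  refine (finrank_mono ?_).trans (finrank_add_le_finrank_add_finrank _ _)
  rintro _ ⟨x, rfl⟩
  rw [Matrix.mulVecLin_apply, Matrix.sub_mulVec]
  exact sub_mem (mem_sup_left ⟨x, rfl⟩) (mem_sup_right ⟨x, rfl⟩)

/-- The Hilbert space of families of vectors of `E` indexed by `ι`. The matrices with the Frobenius
norm are such families, through their columns. -/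
abbrev VecFamily (ι E : Type*) [Fintype ι] [NormedAddCommGroup E] : Type _ :=
  PiLp 2 fun _ : ι => E

namespace VecFamily

variable {ι κ E : Type*} [Fintype ι] [Fintype κ] [NormedAddCommGroup E] [InnerProductSpace ℝ E]

/-- The span of the members of a family; its dimension is the rank of the family. -/
def vecSpan (Z : VecFamily ι E) : Submodule ℝ E := span ℝ (Set.range fun j => Z j)

/-- The energy `‖Zᵀ u‖²` of a family `Z` in the direction `u`. Its supremum over the unit vectors
is the square of the spectral norm of `Z`. -/
def energy (Z : VecFamily ι E) (u : E) : ℝ := ∑ j, ⟪u, Z j⟫ ^ 2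

/-- `H` is a best approximation of `Z` among the families of rank at most `k`. -/
def IsBestApprox (k : ℕ) (Z H : VecFamily ι E) : Prop :=
  finrank ℝ (vecSpan H) ≤ k ∧
    ∀ W : VecFamily ι E, finrank ℝ (vecSpan W) ≤ k → ‖Z - H‖ ≤ ‖Z - W‖

theorem mem_vecSpan (Z : VecFamily ι E) (j : ι) : Z j ∈ vecSpan Z := subset_span ⟨j, rfl⟩

theorem vecSpan_le_iff {Z : VecFamily ι E} {S : Submodule ℝ E} : vecSpan Z ≤ S ↔ ∀ j, Z j ∈ S :=
  span_le.trans Set.range_subset_iff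

instance (Z : VecFamily ι E) : FiniteDimensional ℝ (vecSpan Z) :=
  FiniteDimensional.span_of_finite ℝ (Set.finite_range _)

theorem finrank_vecSpan_le {Z : VecFamily ι E} {S : Submodule ℝ E} [FiniteDimensional ℝ S]
    (hZ : ∀ j, Z j ∈ S) : finrank ℝ (vecSpan Z) ≤ finrank ℝ S :=
  finrank_mono (vecSpan_le_iff.2 hZ)

theorem finrank_vecSpan_map_le (f : E →ₗ[ℝ] E) (X : VecFamily ι E) :
    finrank ℝ (vecSpan (WithLp.toLp 2 fun j => f (X j) : VecFamily ι E)) ≤ finrank ℝ (vecSpan X) :=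
  (finrank_vecSpan_le fun j => mem_map_of_mem (mem_vecSpan X j)).trans (finrank_map_le f _)

theorem norm_le_norm_of_forall_norm_le {F : Type*} [NormedAddCommGroup F] {Y Z : VecFamily ι F}
    (h : ∀ j, ‖Y j‖ ≤ ‖Z j‖) : ‖Y‖ ≤ ‖Z‖ := by
  refine le_of_sq_le_sq ?_ (norm_nonneg Z)
  simp only [PiLp.norm_sq_eq_of_L2]
  gcongr with j
  exact h j

theorem inner_eq_zero_of_mem {B T : VecFamily ι E} {S : Submodule ℝ E} (hB : ∀ j, B j ∈ S)
    (hT : ∀ j, T j ∈ Sᗮ) : ⟪B, T⟫ = 0 := by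
  rw [PiLp.inner_apply]
  exact Finset.sum_eq_zero fun j _ => inner_right_of_mem_orthogonal (hB j) (hT j)

theorem energy_smul (Z : VecFamily ι E) (c : ℝ) (u : E) :
    energy Z (c • u) = c ^ 2 * energy Z u := by
  simp only [energy, real_inner_smul_left, mul_pow, Finset.mul_sum]

theorem energy_nonneg (Z : VecFamily ι E) (u : E) : 0 ≤ energy Z u :=
  Finset.sum_nonneg fun _ _ => sq_nonneg _

theorem energy_congr {Y Z : VecFamily ι E} {u v : E} (h : ∀ j, ⟪u, Y j⟫ = ⟪v, Z j⟫) :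
    energy Y u = energy Z v :=
  Finset.sum_congr rfl fun j _ => by rw [h j]

theorem sum_energy_le_norm_sq {b : κ → E} (hb : Orthonormal ℝ b) (Z : VecFamily ι E) :
    ∑ i, energy Z (b i) ≤ ‖Z‖ ^ 2 := by
  rw [PiLp.norm_sq_eq_of_L2]
  simp only [energy]
  rw [Finset.sum_comm]
  exact Finset.sum_le_sum fun j _ => by simpa using hb.sum_inner_products_le (Z j)

theorem inner_sq_le_norm_sq_mul_sum_energy {S : Submodule ℝ E} (b : OrthonormalBasis κ ℝ S)
    {B : VecFamily ι E} (hB : ∀ j, B j ∈ S) (T : VecFamily ι E) :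
    ⟪B, T⟫ ^ 2 ≤ ‖B‖ ^ 2 * ∑ i, energy T (b i) := by
  have hexpand (j : ι) : ⟪B j, T j⟫ = ∑ i, ⟪(b i : E), B j⟫ * ⟪(b i : E), T j⟫ := by
    have hrepr : ∑ i, ⟪(b i : E), B j⟫ • (b i : E) = B j := by
      simpa using congrArg S.subtype (b.sum_repr' ⟨B j, hB j⟩)
    conv_lhs => rw [← hrepr]
    simp only [sum_inner, real_inner_smul_left]
  calc ⟪B, T⟫ ^ 2 = (∑ x : κ × ι, ⟪(b x.1 : E), B x.2⟫ * ⟪(b x.1 : E), T x.2⟫) ^ 2 := by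
        rw [PiLp.inner_apply, Fintype.sum_prod_type_right]
        simp only [hexpand]
    _ ≤ (∑ i, energy B (b i)) * ∑ i, energy T (b i) := by
        simpa only [Fintype.sum_prod_type, energy] using Finset.sum_mul_sq_le_sq_mul_sq Finset.univ
          (fun x : κ × ι => ⟪(b x.1 : E), B x.2⟫) (fun x => ⟪(b x.1 : E), T x.2⟫)
    _ ≤ ‖B‖ ^ 2 * ∑ i, energy T (b i) := by
        gcongr
        · exact Finset.sum_nonneg fun i _ => energy_nonneg T _
        · exact sum_energy_le_norm_sq (b.orthonormal.comp_linearIsometry S.subtypeₗᵢ) B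

-- The duality between the spectral and the nuclear norm, as `‖B‖_* ≤ √(rank B) ‖B‖`.
theorem mul_inner_sq_le_of_energy_le {B T : VecFamily ι E} {p c : ℝ} (hp : 0 ≤ p)
    (hT : ∀ u, p * energy T u ≤ c * ‖u‖ ^ 2) :
    p * ⟪B, T⟫ ^ 2 ≤ finrank ℝ (vecSpan B) * c * ‖B‖ ^ 2 := by
  let b := stdOrthonormalBasis ℝ (vecSpan B)
  have hb (i) : p * energy T (b i) ≤ c := by
    have hnorm : ‖(b i : E)‖ = 1 := b.orthonormal.1 i
    simpa [hnorm] using hT (b i)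
  calc p * ⟪B, T⟫ ^ 2 ≤ p * (‖B‖ ^ 2 * ∑ i, energy T (b i)) := by
        gcongr
        exact inner_sq_le_norm_sq_mul_sum_energy b (mem_vecSpan B) T
    _ = (∑ i, p * energy T (b i)) * ‖B‖ ^ 2 := by rw [← Finset.mul_sum]; ring
    _ ≤ (∑ _i : Fin (finrank ℝ (vecSpan B)), c) * ‖B‖ ^ 2 := by
        gcongr with i
        exact hb i
    _ = finrank ℝ (vecSpan B) * c * ‖B‖ ^ 2 := by simp

namespace IsBestApprox

variable {k : ℕ} {Z H : VecFamily ι E}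

-- Projecting `Z` onto a subspace containing `H` would improve the approximation.
theorem sub_mem_orthogonal (h : IsBestApprox k Z H) {S : Submodule ℝ E} [FiniteDimensional ℝ S]
    (hS : vecSpan H ≤ S) (hk : finrank ℝ S ≤ k) (j : ι) : Z j - H j ∈ Sᗮ := by
  let P : VecFamily ι E := WithLp.toLp 2 fun j => S.starProjection (Z j)
  have hP (j) : P j ∈ S := starProjection_apply_mem S (Z j)
  have hZP (j) : (Z - P) j ∈ Sᗮ := sub_starProjection_mem_orthogonal (Z j)
  have hPH (j) : (P - H) j ∈ S := S.sub_mem (hP j) (vecSpan_le_iff.1 hS j)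
  have hpyth := norm_add_sq_real (P - H) (Z - P)
  rw [add_comm, sub_add_sub_cancel, inner_eq_zero_of_mem hPH hZP] at hpyth
  have hle : ‖Z - H‖ ≤ ‖Z - P‖ := h.2 P ((finrank_vecSpan_le hP).trans hk)
  have hPH0 : ‖P - H‖ = 0 := by
    have := pow_le_pow_left₀ (norm_nonneg _) hle 2
    exact pow_eq_zero_iff two_ne_zero |>.1 (by nlinarith [sq_nonneg ‖P - H‖])
  rw [norm_sub_eq_zero_iff] at hPH0
  exact hPH0 ▸ hZP j

theorem eq_of_finrank_lt (h : IsBestApprox k Z H) (hlt : finrank ℝ (vecSpan H) < k) : Z = H := by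
  ext j
  have hS : vecSpan H ≤ vecSpan H ⊔ ℝ ∙ Z j := le_sup_left
  have hk : finrank ℝ ↥(vecSpan H ⊔ ℝ ∙ Z j) ≤ k :=
    (finrank_sup_span_singleton_le (vecSpan H) (Z j)).trans hlt
  have hmem : Z j - H j ∈ vecSpan H ⊔ ℝ ∙ Z j :=
    sub_mem (mem_sup_right (mem_span_singleton_self _)) (hS (mem_vecSpan H j))
  exact sub_eq_zero.1 <| disjoint_def.1 (orthogonal_disjoint _) _ hmem
    (h.sub_mem_orthogonal hS hk j)

theorem inner_sub_eq_zero (h : IsBestApprox k Z H) : ⟪H, Z - H⟫ = 0 :=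
  inner_eq_zero_of_mem (mem_vecSpan H) (h.sub_mem_orthogonal le_rfl h.1)

-- Otherwise exchanging the direction `q` for `u` would improve the approximation.
theorem energy_le_energy_of_norm_eq_one (h : IsBestApprox k Z H) {q u : E} (hq : q ∈ vecSpan H)
    (hq1 : ‖q‖ = 1) (hu : u ∈ (vecSpan H)ᗮ) (hu1 : ‖u‖ = 1) : energy Z u ≤ energy Z q := by
  have hT (j) : Z j - H j ∈ (vecSpan H)ᗮ := h.sub_mem_orthogonal le_rfl h.1 j
  have huT (j) : ⟪u, Z j - H j⟫ = ⟪u, Z j⟫ := by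
    rw [inner_sub_right, inner_left_of_mem_orthogonal (mem_vecSpan H j) hu, sub_zero]
  have hqT (j) : ⟪q, Z j - H j⟫ = 0 := inner_right_of_mem_orthogonal hq (hT j)
  let W : VecFamily ι E := WithLp.toLp 2 fun j => H j - ⟪q, Z j⟫ • q + ⟪u, Z j⟫ • u
  have hW (j) : W j ∈ vecSpan H ⊓ (ℝ ∙ q)ᗮ ⊔ ℝ ∙ u := by
    refine add_mem_sup ⟨sub_mem (mem_vecSpan H j) (smul_mem _ _ hq), ?_⟩
      (smul_mem _ _ (mem_span_singleton_self u))
    have := hqT j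
    rw [inner_sub_right] at this
    rw [SetLike.mem_coe, mem_orthogonal_singleton_iff_inner_right, inner_sub_right,
      real_inner_smul_right, real_inner_self_eq_norm_sq, hq1]
    linarith
  have hq0 : q ≠ 0 := norm_ne_zero_iff.1 (hq1.trans_ne one_ne_zero)
  have hle : ‖Z - H‖ ≤ ‖Z - W‖ := h.2 W <| (finrank_vecSpan_le hW).trans <|
    (finrank_inf_orthogonal_sup_span_singleton_le hq hq0 u).trans h.1
  have hnorm (j) : ‖(Z - W) j‖ ^ 2 = ‖(Z - H) j‖ ^ 2 + ⟪q, Z j⟫ ^ 2 - ⟪u, Z j⟫ ^ 2 := by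
    have := norm_add_smul_sub_smul_sq hq1 hu1 (inner_right_of_mem_orthogonal hq hu) (hqT j)
      ⟪q, Z j⟫
    rw [huT] at this
    rw [PiLp.sub_apply, PiLp.sub_apply, ← this]
    congr 2
    simp only [W]
    abel
  have hsum : ‖Z - W‖ ^ 2 = ‖Z - H‖ ^ 2 + energy Z q - energy Z u := by
    simp only [PiLp.norm_sq_eq_of_L2, hnorm, energy, Finset.sum_add_distrib,
      Finset.sum_sub_distrib]
  linarith [pow_le_pow_left₀ (norm_nonneg _) hle 2]

theorem energy_le_norm_sq_mul_energy (h : IsBestApprox k Z H) {q u : E} (hq : q ∈ vecSpan H)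
    (hq1 : ‖q‖ = 1) (hu : u ∈ (vecSpan H)ᗮ) : energy Z u ≤ ‖u‖ ^ 2 * energy Z q := by
  rcases eq_or_ne u 0 with rfl | hu0
  · simp [energy]
  · have hunit := h.energy_le_energy_of_norm_eq_one hq hq1 (smul_mem _ ‖u‖⁻¹ hu)
      (by simp [norm_smul, hu0])
    rwa [energy_smul, inv_pow, inv_mul_le_iff₀ (by positivity)] at hunit

-- The analogue of `σ_{k+1}² ≤ (σ_1² + ⋯ + σ_k²) / k`.
theorem finrank_mul_energy_sub_le (h : IsBestApprox k Z H) {R : Submodule ℝ E}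
    (hR : R ≤ vecSpan H) {Y : VecFamily ι E} (hY : ∀ j, Z j - Y j ∈ Rᗮ) (u : E) :
    finrank ℝ R * energy (Z - H) u ≤ ‖Y‖ ^ 2 * ‖u‖ ^ 2 := by
  set u' := u - (vecSpan H).starProjection u with hu'
  have hu'S : u' ∈ (vecSpan H)ᗮ := sub_starProjection_mem_orthogonal u
  have hT (j) : Z j - H j ∈ (vecSpan H)ᗮ := h.sub_mem_orthogonal le_rfl h.1 j
  have hu'norm : ‖u'‖ ≤ ‖u‖ := by
    rw [hu', ← starProjection_orthogonal_val]
    exact norm_starProjection_apply_le (vecSpan H)ᗮ u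
  have henergy : energy (Z - H) u = energy Z u' := by
    refine energy_congr fun j => ?_
    have h1 := inner_right_of_mem_orthogonal (starProjection_apply_mem (vecSpan H) u) (hT j)
    have h2 := inner_left_of_mem_orthogonal (mem_vecSpan H j) hu'S
    rw [inner_sub_right] at h1
    rw [hu', inner_sub_left] at h2 ⊢
    rw [PiLp.sub_apply, inner_sub_right]
    linarith
  have : FiniteDimensional ℝ R := finiteDimensional_of_le hR
  let b := stdOrthonormalBasis ℝ R
  have hb (i) : energy Z u' ≤ ‖u‖ ^ 2 * energy Y (b i) := by
    have hYZ : energy Y (b i) = energy Z (b i) := energy_congr fun j => by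
      have := inner_right_of_mem_orthogonal (b i).2 (hY j)
      rw [inner_sub_right] at this
      linarith
    rw [hYZ]
    refine (h.energy_le_norm_sq_mul_energy (hR (b i).2) (b.orthonormal.1 i) hu'S).trans ?_
    gcongr
    exact energy_nonneg Z _
  calc finrank ℝ R * energy (Z - H) u = ∑ _i : Fin (finrank ℝ R), energy Z u' := by
        simp [henergy]
    _ ≤ ∑ i, ‖u‖ ^ 2 * energy Y (b i) := Finset.sum_le_sum fun i _ => hb i
    _ = ‖u‖ ^ 2 * ∑ i, energy Y (b i) := by rw [Finset.mul_sum]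
    _ ≤ ‖u‖ ^ 2 * ‖Y‖ ^ 2 := by
        gcongr
        exact sum_energy_le_norm_sq (b.orthonormal.comp_linearIsometry R.subtypeₗᵢ) Y
    _ = ‖Y‖ ^ 2 * ‖u‖ ^ 2 := mul_comm _ _

theorem mul_inner_sub_sq_le (h : IsBestApprox k Z H) (B : VecFamily ι E) :
    k * ⟪B, Z - H⟫ ^ 2 ≤ finrank ℝ (vecSpan B) * ‖H‖ ^ 2 * ‖B‖ ^ 2 := by
  rcases h.1.lt_or_eq with hlt | heq
  · rw [h.eq_of_finrank_lt hlt, sub_self, inner_zero_right, zero_pow two_ne_zero, mul_zero]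
    positivity
  · refine mul_inner_sq_le_of_energy_le (Nat.cast_nonneg k) fun u => ?_
    rw [← heq]
    exact h.finrank_mul_energy_sub_le le_rfl (h.sub_mem_orthogonal le_rfl h.1) u

-- Only the part of `X` orthogonal to `vecSpan H` contributes to the inner product, and the energy
-- of `Z - H` is controlled on the directions of `vecSpan H` in which `X` vanishes.
theorem sub_mul_inner_sub_sq_le (h : IsBestApprox k Z H) (X : VecFamily ι E) :
    ((k : ℝ) - finrank ℝ (vecSpan X)) * ⟪X, Z - H⟫ ^ 2 ≤
      finrank ℝ (vecSpan X) * ‖X - Z‖ ^ 2 * ‖X - H‖ ^ 2 := by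
  rcases h.1.lt_or_eq with hlt | heq
  · rw [h.eq_of_finrank_lt hlt, sub_self, inner_zero_right, zero_pow two_ne_zero, mul_zero]
    positivity
  set R : Submodule ℝ E := vecSpan H ⊓ (vecSpan X)ᗮ
  set P := (vecSpan H)ᗮ.starProjection
  set B : VecFamily ι E := WithLp.toLp 2 fun j => P (X j)
  have hR : (k : ℝ) - finrank ℝ (vecSpan X) ≤ finrank ℝ R := by
    have := finrank_le_finrank_add_finrank_inf_orthogonal (vecSpan H) (vecSpan X)
    rw [heq] at this
    rw [sub_le_iff_le_add']
    exact_mod_cast this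
  have hXR (j) : Z j - (Z - X) j ∈ Rᗮ := by
    rw [PiLp.sub_apply, sub_sub_cancel]
    exact fun v hv => inner_left_of_mem_orthogonal (mem_vecSpan X j) hv.2
  have henergy (u) : finrank ℝ R * energy (Z - H) u ≤ ‖X - Z‖ ^ 2 * ‖u‖ ^ 2 :=
    norm_sub_rev Z X ▸ h.finrank_mul_energy_sub_le inf_le_left hXR u
  have hB : ‖B‖ ≤ ‖X - H‖ := norm_le_norm_of_forall_norm_le fun j => by
    have hPH : P (H j) = 0 := by
      rw [starProjection_apply_eq_zero_iff]
      exact le_orthogonal_orthogonal _ (mem_vecSpan H j)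
    calc ‖P (X j)‖ = ‖P (X j - H j)‖ := by rw [map_sub, hPH, sub_zero]
      _ ≤ ‖X j - H j‖ := norm_starProjection_apply_le _ _
  have hinner : ⟪X, Z - H⟫ = ⟪B, Z - H⟫ := by
    rw [← sub_eq_zero, ← inner_sub_left]
    refine inner_eq_zero_of_mem (S := vecSpan H) (fun j => ?_) (h.sub_mem_orthogonal le_rfl h.1)
    simp only [B, P, PiLp.sub_apply, starProjection_orthogonal_val, sub_sub_cancel]
    exact starProjection_apply_mem _ _
  calc ((k : ℝ) - finrank ℝ (vecSpan X)) * ⟪X, Z - H⟫ ^ 2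
      ≤ finrank ℝ R * ⟪B, Z - H⟫ ^ 2 := by rw [hinner]; gcongr
    _ ≤ finrank ℝ (vecSpan B) * ‖X - Z‖ ^ 2 * ‖B‖ ^ 2 :=
        mul_inner_sq_le_of_energy_le (Nat.cast_nonneg _) henergy
    _ ≤ finrank ℝ (vecSpan X) * ‖X - Z‖ ^ 2 * ‖X - H‖ ^ 2 := by
        gcongr
        exact finrank_vecSpan_map_le P.toLinearMap X

theorem norm_sub_sq_le (h : IsBestApprox k Z H) (X : VecFamily ι E) :
    ‖X - H‖ ^ 2 ≤ ‖X - Z‖ ^ 2 + 2 * ⟪X, Z - H⟫ := by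
  have hexpand : ‖X - H‖ ^ 2 = ‖X - Z‖ ^ 2 + 2 * ⟪X, Z - H⟫ - 2 * ⟪H, Z - H⟫ - ‖Z - H‖ ^ 2 := by
    rw [← sub_add_sub_cancel X Z H, norm_add_sq_real, inner_sub_left,
      ← real_inner_self_eq_norm_sq (Z - H), inner_sub_left]
    ring
  rw [hexpand, h.inner_sub_eq_zero]
  linarith [sq_nonneg ‖Z - H‖]

theorem norm_sub_le (h : IsBestApprox k Z H) {X : VecFamily ι E} {r : ℕ} {c : ℝ}
    (hX : finrank ℝ (vecSpan X) ≤ r) (hrk : r < k) (hc : 0 ≤ c)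
    (hr : (r : ℝ) ≤ c ^ 2 * (k - r)) :
    ‖X - H‖ ≤ (1 + c + c ^ 2 / 2) * ‖X - Z‖ := by
  have hpos : (0 : ℝ) < k - r := sub_pos.2 (by exact_mod_cast hrk)
  have hinner : ⟪X, Z - H⟫ ≤ c * ‖X - Z‖ * ‖X - H‖ := by
    refine le_of_sq_le_sq (le_of_mul_le_mul_left ?_ hpos) (by positivity)
    calc ((k : ℝ) - r) * ⟪X, Z - H⟫ ^ 2
        ≤ (k - finrank ℝ (vecSpan X)) * ⟪X, Z - H⟫ ^ 2 := by gcongr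
      _ ≤ finrank ℝ (vecSpan X) * ‖X - Z‖ ^ 2 * ‖X - H‖ ^ 2 := h.sub_mul_inner_sub_sq_le X
      _ ≤ c ^ 2 * (k - r) * ‖X - Z‖ ^ 2 * ‖X - H‖ ^ 2 := by
          gcongr
          exact (Nat.cast_le.2 hX).trans hr
      _ = (k - r) * (c * ‖X - Z‖ * ‖X - H‖) ^ 2 := by ring
  have hsq : (‖X - H‖ - c * ‖X - Z‖) ^ 2 ≤ ((1 + c ^ 2 / 2) * ‖X - Z‖) ^ 2 := by
    nlinarith [h.norm_sub_sq_le X, sq_nonneg (c ^ 2 * ‖X - Z‖)]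
  linarith [(abs_le_of_sq_le_sq' hsq (by positivity)).2]

end IsBestApprox

end VecFamily

section Frobenius

variable {m n : Type*} [Fintype m] [Fintype n] {N₁ N₂ : ℕ}

/-- A matrix as the family of its columns, which turns the Frobenius inner product into the one of
`VecFamily`. -/
def matrixCols : Matrix m n ℝ ≃ₗ[ℝ] VecFamily n (EuclideanSpace ℝ m) where
  toFun Z := WithLp.toLp 2 fun j => WithLp.toLp 2 (Z.col j)
  invFun F := Matrix.of fun i j => F j i
  map_add' _ _ := rfl
  map_smul' _ _ := rfl
  left_inv _ := rfl
  right_inv _ := rfl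

theorem frobNorm_eq_norm (Z : Matrix (Fin N₁) (Fin N₂) ℝ) : frobNorm Z = ‖matrixCols Z‖ := by
  rw [PiLp.norm_eq_of_L2, frobNorm, Finset.sum_comm]
  simp only [EuclideanSpace.real_norm_sq_eq]
  rfl

theorem frobInner_eq_inner (Y Z : Matrix (Fin N₁) (Fin N₂) ℝ) :
    frobInner Y Z = ⟪matrixCols Y, matrixCols Z⟫ := by
  rw [frobInner, Finset.sum_comm]
  simp only [PiLp.inner_apply, RCLike.inner_apply', conj_trivial]
  rfl

theorem rank_eq_finrank_vecSpan (Z : Matrix m n ℝ) :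
    Z.rank = finrank ℝ (VecFamily.vecSpan (matrixCols Z)) := by
  let f := (WithLp.linearEquiv 2 ℝ (m → ℝ)).symm
  have hmap : VecFamily.vecSpan (matrixCols Z) = (span ℝ (Set.range Z.col)).map f.toLinearMap := by
    rw [map_span, ← Set.range_comp]
    rfl
  rw [hmap, f.finrank_map_eq, Matrix.rank_eq_finrank_span_cols]

theorem frobNorm_nonneg (Z : Matrix (Fin N₁) (Fin N₂) ℝ) : 0 ≤ frobNorm Z := Real.sqrt_nonneg _

theorem frobNorm_eq_zero_iff {Z : Matrix (Fin N₁) (Fin N₂) ℝ} : frobNorm Z = 0 ↔ Z = 0 := by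
  rw [frobNorm_eq_norm, norm_eq_zero, LinearEquiv.map_eq_zero_iff]

theorem continuous_frobNorm : Continuous (frobNorm : Matrix (Fin N₁) (Fin N₂) ℝ → ℝ) := by
  unfold frobNorm
  fun_prop

theorem frobNorm_pos {Z : Matrix (Fin N₁) (Fin N₂) ℝ} (hZ : Z ≠ 0) : 0 < frobNorm Z :=
  (frobNorm_nonneg Z).lt_of_ne' (frobNorm_eq_zero_iff.not.2 hZ)

theorem frobNorm_sub_smul_le {c : ℝ} (hc : 0 ≤ c) (Y Z : Matrix (Fin N₁) (Fin N₂) ℝ) :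
    frobNorm (Y - c • Z) ≤ frobNorm Y + c * frobNorm Z := by
  simp only [frobNorm_eq_norm, map_sub, map_smul]
  refine (norm_sub_le _ _).trans_eq ?_
  rw [norm_smul, Real.norm_of_nonneg hc]

theorem frobNorm_sub_smul_sq (c : ℝ) (Y Z : Matrix (Fin N₁) (Fin N₂) ℝ) :
    frobNorm (Y - c • Z) ^ 2 = frobNorm Y ^ 2 - 2 * c * frobInner Y Z + c ^ 2 * frobNorm Z ^ 2 := by
  simp only [frobNorm_eq_norm, frobInner_eq_inner, map_sub, map_smul, norm_sub_sq_real,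
    real_inner_smul_right, norm_smul, mul_pow, Real.norm_eq_abs, sq_abs, mul_assoc]

namespace IsBestRankApprox

variable {k : ℕ} {Z H : Matrix (Fin N₁) (Fin N₂) ℝ}

theorem isBestApprox_matrixCols (h : IsBestRankApprox k Z H) :
    VecFamily.IsBestApprox k (matrixCols Z) (matrixCols H) := by
  refine ⟨rank_eq_finrank_vecSpan H ▸ h.1, fun W hW => ?_⟩
  have hle := h.2 (matrixCols.symm W)
    (by rwa [rank_eq_finrank_vecSpan, LinearEquiv.apply_symm_apply])
  simpa only [frobNorm_eq_norm, map_sub, LinearEquiv.apply_symm_apply] using hle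

theorem frobInner_eq_frobNorm_sq (h : IsBestRankApprox k Z H) :
    frobInner Z H = frobNorm H ^ 2 := by
  have horth := h.isBestApprox_matrixCols.inner_sub_eq_zero
  rw [inner_sub_right, real_inner_self_eq_norm_sq, real_inner_comm] at horth
  rw [frobInner_eq_inner, frobNorm_eq_norm]
  linarith

theorem mul_frobInner_sub_sq_le (h : IsBestRankApprox k Z H) (B : Matrix (Fin N₁) (Fin N₂) ℝ) :
    k * frobInner B (Z - H) ^ 2 ≤ B.rank * frobNorm H ^ 2 * frobNorm B ^ 2 := by
  simpa only [frobInner_eq_inner, frobNorm_eq_norm, rank_eq_finrank_vecSpan, map_sub] using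
    h.isBestApprox_matrixCols.mul_inner_sub_sq_le (matrixCols B)

theorem frobNorm_sub_le (h : IsBestRankApprox k Z H) {B : Matrix (Fin N₁) (Fin N₂) ℝ} {r : ℕ}
    {c : ℝ} (hB : B.rank ≤ r) (hrk : r < k) (hc : 0 ≤ c) (hr : (r : ℝ) ≤ c ^ 2 * (k - r)) :
    frobNorm (B - H) ≤ (1 + c + c ^ 2 / 2) * frobNorm (B - Z) := by
  simpa only [frobNorm_eq_norm, map_sub] using
    h.isBestApprox_matrixCols.norm_sub_le (rank_eq_finrank_vecSpan B ▸ hB) hrk hc hr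

end IsBestRankApprox

end Frobenius

section L1

variable {m : ℕ} (v w : Fin m → ℝ)

theorem l1norm_nonneg : 0 ≤ l1norm v := Finset.sum_nonneg fun _ _ => abs_nonneg _

theorem l1norm_add_le : l1norm (v + w) ≤ l1norm v + l1norm w := by
  rw [l1norm, l1norm, l1norm, ← Finset.sum_add_distrib]
  exact Finset.sum_le_sum fun _ _ => abs_add_le _ _

theorem l1norm_sub_le : l1norm (v - w) ≤ l1norm v + l1norm w := by
  rw [l1norm, l1norm, l1norm, ← Finset.sum_add_distrib]
  exact Finset.sum_le_sum fun _ _ => abs_sub _ _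

theorem sum_sgnVec_mul_self : ∑ i, sgnVec v i * v i = l1norm v :=
  Finset.sum_congr rfl fun i _ => by
    rcases lt_trichotomy (v i) 0 with h | h | h
    · simp [sgnVec, Real.sign_of_neg h, abs_of_neg h]
    · simp [h]
    · simp [sgnVec, Real.sign_of_pos h, abs_of_pos h]

theorem sum_sgnVec_mul_le : ∑ i, sgnVec v i * w i ≤ l1norm w := by
  refine Finset.sum_le_sum fun i _ => ?_
  rcases Real.sign_apply_eq (v i) with h | h | h <;>
    simp only [sgnVec, h, neg_one_mul, zero_mul, one_mul]
  exacts [neg_le_abs _, abs_nonneg _, le_abs_self _]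

theorem l1norm_sub_l1norm_sub_le :
    l1norm v - l1norm (v - w) ≤ ∑ i, sgnVec v i * w i := by
  have hsplit : ∑ i, sgnVec v i * v i =
      ∑ i, sgnVec v i * w i + ∑ i, sgnVec v i * (v - w) i := by
    simp only [← Finset.sum_add_distrib, ← mul_add, Pi.sub_apply, add_sub_cancel]
  rw [sum_sgnVec_mul_self] at hsplit
  linarith [sum_sgnVec_mul_le v (v - w)]

end L1

section IterativeHardThresholding

variable {N₁ N₂ m s t : ℕ} {γ α : ℝ} {A : Matrix (Fin N₁) (Fin N₂) ℝ →ₗ[ℝ] (Fin m → ℝ)}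

/-- The modified rank-restricted isometry property of order `k` with constants `α` and `β`. -/
def ModifiedRIP (A : Matrix (Fin N₁) (Fin N₂) ℝ →ₗ[ℝ] (Fin m → ℝ)) (k : ℕ) (α β : ℝ) : Prop :=
  ∀ Z : Matrix (Fin N₁) (Fin N₂) ℝ, Z.rank ≤ k →
    α * frobNorm Z ≤ l1norm (A Z) ∧ l1norm (A Z) ≤ β * frobNorm Z

theorem ModifiedRIP.mono {k l : ℕ} {β β' : ℝ} (h : ModifiedRIP A l α β) (hkl : k ≤ l)
    (hβ : β ≤ β') : ModifiedRIP A k α β' := fun Z hZ =>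
  ⟨(h Z (hZ.trans hkl)).1, (h Z (hZ.trans hkl)).2.trans <|
    mul_le_mul_of_nonneg_right hβ (frobNorm_nonneg Z)⟩

theorem ModifiedRIP.mul_frobNorm_le_l1norm_of_l1norm_sub_le {β c : ℝ} (h : ModifiedRIP A t α β)
    {U : Matrix (Fin N₁) (Fin N₂) ℝ} (hU : U.rank ≤ t) {v : Fin m → ℝ}
    (hE : l1norm (v - A U) ≤ c * (α * frobNorm U)) : (1 - c) * (α * frobNorm U) ≤ l1norm v := by
  have htri := l1norm_sub_le v (v - A U)
  rw [sub_sub_cancel] at htri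
  linarith [(h U hU).1]

/-- The step size `μ` of the modified iterative hard thresholding algorithm, for the residual `v`
and the direction `W`. -/
noncomputable def stepSize (γ : ℝ) (A : Matrix (Fin N₁) (Fin N₂) ℝ →ₗ[ℝ] (Fin m → ℝ))
    (v : Fin m → ℝ) (W : Matrix (Fin N₁) (Fin N₂) ℝ) : ℝ :=
  if W ≠ 0 then
    l1norm v / max (frobNorm W ^ 2) ((1 / (4 * γ ^ 2)) * l1norm (A W) ^ 2 / frobNorm W ^ 2)
  else 0

/-- `X'` is obtained from `X` by a step of the modified iterative hard thresholding algorithm for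
the measurements `y`. -/
def IsMIHTStep (s t : ℕ) (γ : ℝ) (A : Matrix (Fin N₁) (Fin N₂) ℝ →ₗ[ℝ] (Fin m → ℝ))
    (Astar : (Fin m → ℝ) → Matrix (Fin N₁) (Fin N₂) ℝ) (y : Fin m → ℝ)
    (X X' : Matrix (Fin N₁) (Fin N₂) ℝ) : Prop :=
  ∃ W, IsBestRankApprox t (Astar (sgnVec (y - A X))) W ∧
    IsBestRankApprox s (X + stepSize γ A (y - A X) W • W) X'

/-- `W` is a best rank-`t` approximation of `𝓐*(sgn v)`, a subgradient of `‖𝓐(·)‖₁` at the points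
which `𝓐` maps to `v`. It is characterized here by its inner products. -/
def IsDescentDirection (t : ℕ) (A : Matrix (Fin N₁) (Fin N₂) ℝ →ₗ[ℝ] (Fin m → ℝ)) (v : Fin m → ℝ)
    (W : Matrix (Fin N₁) (Fin N₂) ℝ) : Prop :=
  ∃ G, (∀ Z, frobInner G Z = ∑ i, sgnVec v i * A Z i) ∧ IsBestRankApprox t G W

section Step

variable {v : Fin m → ℝ} {U W : Matrix (Fin N₁) (Fin N₂) ℝ}

namespace IsDescentDirection

theorem frobNorm_sq_le_l1norm (hW : IsDescentDirection t A v W) :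
    frobNorm W ^ 2 ≤ l1norm (A W) := by
  obtain ⟨G, hG, hGW⟩ := hW
  rw [← hGW.frobInner_eq_frobNorm_sq, hG]
  exact sum_sgnVec_mul_le v (A W)

theorem rank_le (hW : IsDescentDirection t A v W) : W.rank ≤ t :=
  let ⟨_, _, hGW⟩ := hW
  hGW.1

theorem frobNorm_le {β : ℝ} (hW : IsDescentDirection t A v W) (hβ : 0 ≤ β)
    (hRIP : ModifiedRIP A t α β) : frobNorm W ≤ β := by
  have hsq := hW.frobNorm_sq_le_l1norm.trans (hRIP W hW.rank_le).2
  nlinarith [frobNorm_nonneg W]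

-- The error of the rank-`t` approximation is spread over `t` directions, so it is nearly
-- orthogonal to a matrix of much smaller rank.
theorem le_frobInner (hW : IsDescentDirection t A v W) (hγ : 0 ≤ γ) (hα : 0 ≤ α)
    (hRIP : ModifiedRIP A t α (γ * α)) (ht : 0 < t) (hU : 400 * γ ^ 2 * U.rank ≤ t) :
    l1norm v - l1norm (v - A U) - α * frobNorm U / 20 ≤ frobInner U W := by
  have hWγ : frobNorm W ≤ γ * α := hW.frobNorm_le (by positivity) hRIP
  obtain ⟨G, hG, hGW⟩ := hW
  have ha := frobNorm_nonneg U
  have hcorr : frobInner U (G - W) ≤ α * frobNorm U / 20 := by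
    have ht' : (0 : ℝ) < t := by exact_mod_cast ht
    refine le_of_sq_le_sq (le_of_mul_le_mul_left ?_ ht') (by positivity)
    calc t * frobInner U (G - W) ^ 2
        ≤ U.rank * frobNorm W ^ 2 * frobNorm U ^ 2 := hGW.mul_frobInner_sub_sq_le U
      _ ≤ U.rank * (γ * α) ^ 2 * frobNorm U ^ 2 := by
          gcongr
          exact frobNorm_nonneg W
      _ = 400 * γ ^ 2 * U.rank * (α * frobNorm U / 20) ^ 2 := by ring
      _ ≤ t * (α * frobNorm U / 20) ^ 2 := by gcongr
  have hUG : frobInner U (G - W) = frobInner G U - frobInner U W := by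
    simp only [frobInner_eq_inner, map_sub, inner_sub_right, real_inner_comm]
  linarith [hG U ▸ l1norm_sub_l1norm_sub_le v (A U)]

end IsDescentDirection

variable (γ A v W) in
theorem stepSize_nonneg : 0 ≤ stepSize γ A v W := by
  unfold stepSize
  split_ifs
  · exact div_nonneg (l1norm_nonneg v) (le_max_of_le_left (sq_nonneg _))
  · exact le_rfl

variable (γ A v W) in
theorem stepSize_mul_frobNorm_sq_le :
    stepSize γ A v W * frobNorm W ^ 2 ≤ l1norm v := by
  rcases eq_or_ne W 0 with hW | hW
  · simpa [stepSize, hW] using l1norm_nonneg v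
  · have hpos : 0 < frobNorm W ^ 2 := pow_pos (frobNorm_pos hW) 2
    rw [stepSize, if_pos hW, div_mul_eq_mul_div, div_le_iff₀ (lt_max_of_lt_left hpos)]
    exact mul_le_mul_of_nonneg_left (le_max_left _ _) (l1norm_nonneg v)

-- The maximum in the step size dominates the geometric mean `‖A W‖₁ / (2 γ)` of its two entries.
theorem stepSize_mul_frobNorm_le (hγ : 0 < γ) (hW : α * frobNorm W ≤ l1norm (A W)) :
    α * (stepSize γ A v W * frobNorm W) ≤ 2 * γ * l1norm v := by
  rcases eq_or_ne W 0 with rfl | hW0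
  · simpa [stepSize] using mul_nonneg (by positivity : 0 ≤ 2 * γ) (l1norm_nonneg v)
  have hpos : 0 < frobNorm W := frobNorm_pos hW0
  rw [stepSize, if_pos hW0]
  set w := frobNorm W
  set q := l1norm (A W)
  set M := max (w ^ 2) (1 / (4 * γ ^ 2) * q ^ 2 / w ^ 2)
  have hM : 0 < M := lt_max_of_lt_left (by positivity)
  have hmean : q ≤ 2 * γ * M := by
    refine le_of_sq_le_sq ?_ (by positivity)
    calc q ^ 2 = (2 * γ) ^ 2 * (w ^ 2 * (1 / (4 * γ ^ 2) * q ^ 2 / w ^ 2)) := by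
          field_simp; ring
      _ ≤ (2 * γ) ^ 2 * (M * M) := by
          gcongr
          exacts [le_max_left _ _, le_max_right _ _]
      _ = (2 * γ * M) ^ 2 := by ring
  calc α * (l1norm v / M * w) = l1norm v * (α * w) / M := by ring
    _ ≤ l1norm v * (2 * γ * M) / M := by
        gcongr ?_ / M
        exact mul_le_mul_of_nonneg_left (hW.trans hmean) (l1norm_nonneg v)
    _ = 2 * γ * l1norm v := by field_simp

theorem l1norm_le_sq_mul_stepSize {β : ℝ} (hγ : 1 ≤ γ) (hW0 : W ≠ 0) (hWβ : frobNorm W ≤ β)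
    (hAW : l1norm (A W) ≤ β * frobNorm W) : l1norm v ≤ β ^ 2 * stepSize γ A v W := by
  have hpos : 0 < frobNorm W := frobNorm_pos hW0
  rw [stepSize, if_pos hW0, mul_div_assoc', le_div_iff₀ (lt_max_of_lt_left (by positivity)),
    mul_comm]
  gcongr
  · exact l1norm_nonneg v
  refine max_le (by gcongr) ?_
  rw [div_le_iff₀ (by positivity)]
  have hγ' : 1 / (4 * γ ^ 2) ≤ 1 :=
    (one_div_mul_sq_le (by norm_num) hγ).trans (by norm_num)
  calc 1 / (4 * γ ^ 2) * l1norm (A W) ^ 2 ≤ 1 * (β * frobNorm W) ^ 2 := by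
        gcongr
        exact l1norm_nonneg _
    _ = β ^ 2 * frobNorm W ^ 2 := by ring

namespace IsDescentDirection

theorem frobNorm_sub_stepSize_smul_sq_le (hW : IsDescentDirection t A v W) (hγ : 0 ≤ γ) (hα : 0 ≤ α)
    (hRIP : ModifiedRIP A t α (γ * α)) (ht : 0 < t) (hU : 400 * γ ^ 2 * U.rank ≤ t) :
    frobNorm (U - stepSize γ A v W • W) ^ 2 ≤ frobNorm U ^ 2 -
      stepSize γ A v W * (l1norm v - 2 * l1norm (v - A U) - α * frobNorm U / 10) := by
  have hμ := stepSize_nonneg γ A v W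
  have hinner := hW.le_frobInner hγ hα hRIP ht hU
  have hμW := stepSize_mul_frobNorm_sq_le γ A v W
  rw [frobNorm_sub_smul_sq]
  set μ := stepSize γ A v W
  linarith [mul_le_mul_of_nonneg_left hinner hμ, mul_le_mul_of_nonneg_left hμW hμ]

theorem mul_frobNorm_le_sq_mul_stepSize (hW : IsDescentDirection t A v W) (hγ : 1 ≤ γ)
    (hα : 0 < α) (hRIP : ModifiedRIP A t α (γ * α)) (hW0 : W ≠ 0) {c : ℝ}
    (hc : c * (α * frobNorm U) ≤ l1norm v) :
    c * frobNorm U ≤ γ ^ 2 * α * stepSize γ A v W := by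
  refine le_of_mul_le_mul_left ?_ hα
  calc α * (c * frobNorm U) = c * (α * frobNorm U) := by ring
    _ ≤ (γ * α) ^ 2 * stepSize γ A v W := hc.trans <| l1norm_le_sq_mul_stepSize hγ hW0
        (hW.frobNorm_le (by positivity) hRIP) (hRIP W hW.rank_le).2
    _ = α * (γ ^ 2 * α * stepSize γ A v W) := by ring

theorem frobNorm_sub_stepSize_smul_le_of_l1norm_le (hW : IsDescentDirection t A v W) (hγ : 1 ≤ γ)
    (hα : 0 < α) (hRIP : ModifiedRIP A t α (γ * α)) (ht : 0 < t)
    (hU : 400 * γ ^ 2 * U.rank ≤ t) (hUt : U.rank ≤ t)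
    (hE : l1norm (v - A U) ≤ α * frobNorm U / 10) :
    frobNorm (U - stepSize γ A v W • W) ≤ (1 - 1 / (4 * γ ^ 2)) * frobNorm U := by
  have hv : 9 / 10 * (α * frobNorm U) ≤ l1norm v := by
    linarith [hRIP.mul_frobNorm_le_l1norm_of_l1norm_sub_le (c := 1 / 10) hUt
      (hE.trans_eq (by ring))]
  rcases eq_or_ne W 0 with rfl | hW0
  · have hinner := hW.le_frobInner (by positivity) hα.le hRIP ht hU
    rw [frobInner_eq_inner, map_zero, inner_zero_right] at hinner
    have hU0 : frobNorm U = 0 := by nlinarith [frobNorm_nonneg U]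
    simp [hU0]
  have hγ1 : 1 / (4 * γ ^ 2) ≤ 1 / 4 := one_div_mul_sq_le (by norm_num) hγ
  have hγ0 : 0 < 1 / (4 * γ ^ 2) := by positivity
  have hdecrease : 54 / 25 * (1 / (4 * γ ^ 2)) * frobNorm U ^ 2 ≤
      stepSize γ A v W * (3 / 5 * (α * frobNorm U)) := by
    have hμ := hW.mul_frobNorm_le_sq_mul_stepSize hγ hα hRIP hW0 hv
    calc 54 / 25 * (1 / (4 * γ ^ 2)) * frobNorm U ^ 2
        = 3 / 5 * frobNorm U / γ ^ 2 * (9 / 10 * frobNorm U) := by ring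
      _ ≤ 3 / 5 * frobNorm U / γ ^ 2 * (γ ^ 2 * α * stepSize γ A v W) := by
          gcongr
          have := frobNorm_nonneg U
          positivity
      _ = stepSize γ A v W * (3 / 5 * (α * frobNorm U)) := by field_simp
  refine le_of_sq_le_sq ?_ (mul_nonneg (by linarith) (frobNorm_nonneg U))
  calc frobNorm (U - stepSize γ A v W • W) ^ 2
      ≤ frobNorm U ^ 2 -
          stepSize γ A v W * (l1norm v - 2 * l1norm (v - A U) - α * frobNorm U / 10) :=
        hW.frobNorm_sub_stepSize_smul_sq_le (by positivity) hα.le hRIP ht hU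
    _ ≤ frobNorm U ^ 2 - stepSize γ A v W * (3 / 5 * (α * frobNorm U)) := by
        gcongr
        · exact stepSize_nonneg γ A v W
        · linarith
    _ ≤ (1 - 2 * (1 / (4 * γ ^ 2))) * frobNorm U ^ 2 := by
        linarith [mul_nonneg hγ0.le (sq_nonneg (frobNorm U))]
    _ ≤ ((1 - 1 / (4 * γ ^ 2)) * frobNorm U) ^ 2 := by
        rw [mul_pow]
        gcongr
        linarith [sq_nonneg (1 / (4 * γ ^ 2))]

theorem frobNorm_sub_stepSize_smul_le_of_le_l1norm (hW : IsDescentDirection t A v W) (hγ : 1 ≤ γ)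
    (hα : 0 < α) (hRIP : ModifiedRIP A t α (γ * α)) (hUt : U.rank ≤ t)
    (hE : α * frobNorm U ≤ 10 * l1norm (v - A U)) :
    frobNorm (U - stepSize γ A v W • W) ≤ 32 * γ ^ 2 / α * l1norm (v - A U) := by
  have hE0 := l1norm_nonneg (v - A U)
  have hv : l1norm v ≤ (1 + 10 * γ) * l1norm (v - A U) := by
    have := l1norm_add_le (v - A U) (A U)
    rw [sub_add_cancel] at this
    nlinarith [(hRIP U hUt).2]
  rw [div_mul_eq_mul_div, le_div_iff₀ hα]
  calc frobNorm (U - stepSize γ A v W • W) * α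
      ≤ (frobNorm U + stepSize γ A v W * frobNorm W) * α := by
        gcongr
        exact frobNorm_sub_smul_le (stepSize_nonneg γ A v W) U W
    _ = α * frobNorm U + α * (stepSize γ A v W * frobNorm W) := by ring
    _ ≤ 10 * l1norm (v - A U) + 2 * γ * l1norm v := by
        exact add_le_add hE (stepSize_mul_frobNorm_le (by positivity) (hRIP W hW.rank_le).1)
    _ ≤ 10 * l1norm (v - A U) + 2 * γ * ((1 + 10 * γ) * l1norm (v - A U)) := by gcongr
    _ = (10 + 2 * γ + 20 * γ ^ 2) * l1norm (v - A U) := by ring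
    _ ≤ 32 * γ ^ 2 * l1norm (v - A U) := by
        gcongr
        nlinarith

theorem frobNorm_sub_stepSize_smul_le (hW : IsDescentDirection t A v W) (hγ : 1 ≤ γ) (hα : 0 < α)
    (hRIP : ModifiedRIP A t α (γ * α)) (ht : 0 < t) (hU : 400 * γ ^ 2 * U.rank ≤ t) :
    frobNorm (U - stepSize γ A v W • W) ≤
      (1 - 1 / (4 * γ ^ 2)) * frobNorm U + 32 * γ ^ 2 / α * l1norm (v - A U) := by
  have ha := frobNorm_nonneg U
  have hE := l1norm_nonneg (v - A U)
  have hγ1 : 1 / (4 * γ ^ 2) ≤ 1 / 4 := one_div_mul_sq_le (by norm_num) hγ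
  have hUt : U.rank ≤ t := by
    have : (U.rank : ℝ) ≤ t :=
      (le_mul_of_one_le_left (Nat.cast_nonneg _) (by nlinarith)).trans hU
    exact_mod_cast this
  rcases le_total (l1norm (v - A U)) (α * frobNorm U / 10) with hle | hle
  · have := hW.frobNorm_sub_stepSize_smul_le_of_l1norm_le hγ hα hRIP ht hU hUt hle
    have : 0 ≤ 32 * γ ^ 2 / α * l1norm (v - A U) := by positivity
    linarith
  · have := hW.frobNorm_sub_stepSize_smul_le_of_le_l1norm hγ hα hRIP hUt (by linarith)
    have := mul_nonneg (by linarith : 0 ≤ 1 - 1 / (4 * γ ^ 2)) ha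
    linarith

end IsDescentDirection

end Step

theorem IsBestRankApprox.frobNorm_sub_le_of_mul_le {Z H B : Matrix (Fin N₁) (Fin N₂) ℝ} {r : ℕ}
    (h : IsBestRankApprox s Z H) (hγ : 1 ≤ γ) (hr : 0 < r) (hB : B.rank ≤ r)
    (hs : 100 * γ ^ 4 * r ≤ s) :
    frobNorm (B - H) ≤ (1 + 1 / (8 * γ ^ 2)) * frobNorm (B - Z) := by
  have hr' : (0 : ℝ) < r := by exact_mod_cast hr
  have hγ4 : 1 ≤ γ ^ 4 := one_le_pow₀ hγ
  have hγr : r ≤ γ ^ 4 * r := le_mul_of_one_le_left hr'.le hγ4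
  have hrs : r < s := by
    have : (r : ℝ) < s := by linarith
    exact_mod_cast this
  have hc : (r : ℝ) ≤ (1 / (9 * γ ^ 2)) ^ 2 * (s - r) := by
    have : (1 / (9 * γ ^ 2)) ^ 2 * ((s : ℝ) - r) = (s - r) / (81 * γ ^ 4) := by
      field_simp
      ring
    rw [this, le_div_iff₀ (by positivity)]
    linarith
  refine (h.frobNorm_sub_le hB hrs (by positivity) hc).trans
    (mul_le_mul_of_nonneg_right ?_ (frobNorm_nonneg _))
  have hc1 : 1 / (9 * γ ^ 2) ≤ 1 / 9 := one_div_mul_sq_le (by norm_num) hγ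
  have hc0 : 0 ≤ 1 / (9 * γ ^ 2) := by positivity
  rw [show 1 / (8 * γ ^ 2) = 9 / 8 * (1 / (9 * γ ^ 2)) by ring]
  nlinarith

theorem one_add_mul_contraction_add_le {g a b : ℝ} (hg : g ≤ 1 / 8) (ha : 0 ≤ a)
    (hb : 0 ≤ b) : (1 + g) * ((1 - 2 * g) * a + 32 * b) ≤ (1 - g) * a + 36 * b := by
  calc (1 + g) * ((1 - 2 * g) * a + 32 * b)
      = (1 - g - 2 * g ^ 2) * a + 32 * (1 + g) * b := by ring
    _ ≤ (1 - g) * a + 36 * b := by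
        refine add_le_add (mul_le_mul_of_nonneg_right ?_ ha) (mul_le_mul_of_nonneg_right ?_ hb)
        · linarith [sq_nonneg g]
        · linarith

theorem IsMIHTStep.frobNorm_sub_le {Astar : (Fin m → ℝ) → Matrix (Fin N₁) (Fin N₂) ℝ}
    {y : Fin m → ℝ} {X X' B : Matrix (Fin N₁) (Fin N₂) ℝ} {r : ℕ}
    (h : IsMIHTStep s t γ A Astar y X X') (hγ : 1 ≤ γ) (hα : 0 < α)
    (hRIP : ModifiedRIP A t α (γ * α))
    (hadj : ∀ u Z, frobInner (Astar u) Z = ∑ i, u i * A Z i) (hr : 0 < r)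
    (hs : 100 * γ ^ 4 * r ≤ s) (ht : 400 * γ ^ 2 * (s + r) ≤ t) (hB : B.rank ≤ r)
    (hX : X.rank ≤ s) :
    frobNorm (B - X') ≤
      (1 - 1 / (8 * γ ^ 2)) * frobNorm (B - X) + 36 * γ ^ 2 / α * l1norm (y - A B) := by
  obtain ⟨W, hW, hX'⟩ := h
  have hdir : IsDescentDirection t A (y - A X) W := ⟨_, hadj _, hW⟩
  have ht0 : 0 < t := Nat.cast_pos.1 (ht.trans_lt' (by positivity : 0 < 400 * γ ^ 2 * (s + r)))
  have hU : 400 * γ ^ 2 * (B - X).rank ≤ t := by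
    refine le_trans ?_ ht
    gcongr
    rw [add_comm]
    exact_mod_cast (matrix_rank_sub_le B X).trans (add_le_add hB hX)
  have hresidual : y - A X - A (B - X) = y - A B := by rw [map_sub, sub_sub_sub_cancel_right]
  have hgrad := hdir.frobNorm_sub_stepSize_smul_le hγ hα hRIP ht0 hU
  rw [hresidual, sub_sub] at hgrad
  have hthresh := hX'.frobNorm_sub_le_of_mul_le hγ hr hB hs
  calc frobNorm (B - X')
      ≤ (1 + 1 / (8 * γ ^ 2)) * frobNorm (B - (X + stepSize γ A (y - A X) W • W)) := hthresh
    _ ≤ (1 + 1 / (8 * γ ^ 2)) * ((1 - 1 / (4 * γ ^ 2)) * frobNorm (B - X) +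
          32 * γ ^ 2 / α * l1norm (y - A B)) := by gcongr
    _ = (1 + 1 / (8 * γ ^ 2)) * ((1 - 2 * (1 / (8 * γ ^ 2))) * frobNorm (B - X) +
          32 * (γ ^ 2 / α * l1norm (y - A B))) := by ring
    _ ≤ (1 - 1 / (8 * γ ^ 2)) * frobNorm (B - X) + 36 * (γ ^ 2 / α * l1norm (y - A B)) :=
        one_add_mul_contraction_add_le (one_div_mul_sq_le (by norm_num) hγ)
          (frobNorm_nonneg _) (mul_nonneg (by positivity) (l1norm_nonneg _))
    _ = (1 - 1 / (8 * γ ^ 2)) * frobNorm (B - X) + 36 * γ ^ 2 / α * l1norm (y - A B) := by ring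

theorem frobNorm_sub_le_of_forall_isMIHTStep {r : ℕ} (hr : 0 < r) (hγ : 1 ≤ γ)
    (hs : 100 * γ ^ 4 * r ≤ s) (ht : 400 * γ ^ 2 * (s + r) ≤ t) (hα : 0 < α)
    (hRIP : ModifiedRIP A t α (γ * α))
    {Astar : (Fin m → ℝ) → Matrix (Fin N₁) (Fin N₂) ℝ}
    (hadj : ∀ u Z, frobInner (Astar u) Z = ∑ i, u i * A Z i) (y : Fin m → ℝ)
    {Xseq : ℕ → Matrix (Fin N₁) (Fin N₂) ℝ} (h0 : (Xseq 0).rank ≤ s)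
    (hstep : ∀ n, IsMIHTStep s t γ A Astar y (Xseq n) (Xseq (n + 1)))
    {B : Matrix (Fin N₁) (Fin N₂) ℝ} (hB : B.rank ≤ r) :
    (∀ n, frobNorm (B - Xseq n) ≤ (1 - 1 / (8 * γ ^ 2)) ^ n * frobNorm (B - Xseq 0) +
      288 * γ ^ 4 / α * l1norm (y - A B)) ∧
    ∀ Xsharp, MapClusterPt Xsharp Filter.atTop Xseq →
      frobNorm (B - Xsharp) ≤ 288 * γ ^ 4 / α * l1norm (y - A B) := by
  have hrank : ∀ n, (Xseq n).rank ≤ s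
    | 0 => h0
    | n + 1 => let ⟨_, _, hX'⟩ := hstep n; hX'.1
  have hρ0 : 0 < 1 / (8 * γ ^ 2) := by positivity
  have hρ1 : 1 / (8 * γ ^ 2) ≤ 1 :=
    (one_div_mul_sq_le (by norm_num) hγ).trans (by norm_num)
  have hE := l1norm_nonneg (y - A B)
  have hbound : ∀ n, frobNorm (B - Xseq n) ≤
      (1 - 1 / (8 * γ ^ 2)) ^ n * frobNorm (B - Xseq 0) +
        288 * γ ^ 4 / α * l1norm (y - A B) := by
    refine le_pow_mul_add_of_le_mul_add (sub_nonneg.2 hρ1) (by positivity) fun n => ?_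
    refine ((hstep n).frobNorm_sub_le hγ hα hRIP hadj hr hs ht hB (hrank n)).trans_eq ?_
    field_simp
    ring
  refine ⟨hbound, fun Xsharp hX => le_of_mapClusterPt_of_tendsto
    (f := fun Z => frobNorm (B - Z)) hX
    (continuous_frobNorm.comp (continuous_const.sub continuous_id)).continuousAt hbound ?_⟩
  have hpow := tendsto_pow_atTop_nhds_zero_of_lt_one (sub_nonneg.2 hρ1) (sub_lt_self 1 hρ0)
  simpa using (hpow.mul_const (frobNorm (B - Xseq 0))).add_const
    (288 * γ ^ 4 / α * l1norm (y - A B))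

theorem three_sub_two_sqrt_two_pos : 0 < 3 - 2 * √2 := by
  nlinarith [Real.sq_sqrt (zero_le_two (α := ℝ)), Real.sqrt_nonneg 2]

theorem three_sub_two_sqrt_two_le_one : 3 - 2 * √2 ≤ 1 := by
  linarith [Real.one_le_sqrt.2 (one_le_two (α := ℝ))]

theorem one_sub_le_miht_rate {γ : ℝ} (hγ : 0 < γ) :
    1 - 1 / (8 * γ ^ 2) ≤ 1 - (3 - 2 * √2) / (10 * γ ^ 2) := by
  refine sub_le_sub_left
    (div_le_div₀ zero_le_one three_sub_two_sqrt_two_le_one (by positivity) ?_) 1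
  gcongr
  norm_num

theorem miht_constant_le {α β γ x : ℝ} (hγ : 1 ≤ γ) (hα : 0 < α) (hβ : 0 < β)
    (hratio : β / α ≤ γ) (hx : 0 ≤ x) :
    288 * γ ^ 4 / α ≤ 960 * (1 + x) * γ ^ 10 / ((3 - 2 * √2) * β) := by
  calc 288 * γ ^ 4 / α = 288 * γ ^ 4 * (β / α) / β := by field_simp
    _ ≤ 288 * γ ^ 4 * γ / β := by gcongr
    _ = 288 * 1 * γ ^ 5 / (1 * β) := by ring
    _ ≤ 960 * (1 + x) * γ ^ 10 / ((3 - 2 * √2) * β) := by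
        have hpos := three_sub_two_sqrt_two_pos
        have hpow : γ ^ 5 ≤ γ ^ 10 := pow_le_pow_right₀ hγ (by norm_num)
        refine div_le_div₀ (by positivity) ?_ (by positivity)
          (mul_le_mul_of_nonneg_right three_sub_two_sqrt_two_le_one hβ.le)
        gcongr
        · norm_num
        · linarith

theorem miht_truncation_rank_ge {γ r s t : ℝ} (hγ : 1 ≤ γ) (hr : 0 ≤ r) (hs : s = 100 * γ ^ 4 * r)
    (ht : t = 800 * γ ^ 12 * s) : 400 * γ ^ 2 * (s + r) ≤ t := by
  have hrs : r ≤ s := by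
    rw [hs]
    exact le_mul_of_one_le_left hr (by linarith [one_le_pow₀ hγ (n := 4)])
  have hpow : γ ^ 2 ≤ γ ^ 12 := pow_le_pow_right₀ hγ (by norm_num)
  calc 400 * γ ^ 2 * (s + r) ≤ 400 * γ ^ 12 * (s + s) :=
        mul_le_mul (by gcongr) (by gcongr) (by linarith) (by positivity)
    _ = t := by rw [ht]; ring

theorem stmt1_general {r : ℕ} {β : ℝ} (hr : 0 < r) (hγ : 1 ≤ γ) (hs : 100 * γ ^ 4 * r ≤ s)
    (ht : 400 * γ ^ 2 * (s + r) ≤ t) (hα : 0 < α) (hβ : 0 < β) (hratio : β / α ≤ γ)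
    (hRIP : ModifiedRIP A t α β) {Astar : (Fin m → ℝ) → Matrix (Fin N₁) (Fin N₂) ℝ}
    (hadj : ∀ u Z, frobInner (Astar u) Z = ∑ i, u i * A Z i) (y : Fin m → ℝ)
    {Xseq : ℕ → Matrix (Fin N₁) (Fin N₂) ℝ} (h0 : (Xseq 0).rank ≤ s)
    (hstep : ∀ n, IsMIHTStep s t γ A Astar y (Xseq n) (Xseq (n + 1)))
    {B : Matrix (Fin N₁) (Fin N₂) ℝ} (hB : B.rank ≤ r) :
    (∀ n, frobNorm (B - Xseq n) ≤
      (1 - (3 - 2 * √2) / (10 * γ ^ 2)) ^ n * frobNorm (B - Xseq 0) +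
        960 * (1 + √(8 * r / (s + r))) * γ ^ 10 / ((3 - 2 * √2) * β) * l1norm (y - A B)) ∧
    ∀ Xsharp, MapClusterPt Xsharp Filter.atTop Xseq → frobNorm (B - Xsharp) ≤
      960 * (1 + √(8 * r / (s + r))) * γ ^ 10 / ((3 - 2 * √2) * β) * l1norm (y - A B) := by
  obtain ⟨hdecay, hcluster⟩ := frobNorm_sub_le_of_forall_isMIHTStep hr hγ hs ht hα
    (hRIP.mono le_rfl ((div_le_iff₀ hα).1 hratio)) hadj y h0 hstep hB
  have hrate0 : 0 ≤ 1 - 1 / (8 * γ ^ 2) := by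
    linarith [one_div_mul_sq_le (c := 8) (by norm_num) hγ]
  have hrate := one_sub_le_miht_rate (zero_lt_one.trans_le hγ)
  have hd := mul_le_mul_of_nonneg_right
    (miht_constant_le hγ hα hβ hratio (Real.sqrt_nonneg (8 * r / (s + r))))
    (l1norm_nonneg (y - A B))
  have hpow (n : ℕ) := mul_le_mul_of_nonneg_right (pow_le_pow_left₀ hrate0 hrate n)
    (frobNorm_nonneg (B - Xseq 0))
  exact ⟨fun n => (hdecay n).trans (add_le_add (hpow n) hd),
    fun Xsharp hX => (hcluster Xsharp hX).trans hd⟩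

end IterativeHardThresholding

/-- Theorem 2 (stable and robust recovery): under the modified rank-restricted isometry
property of order t+s+r (s = 100γ⁴r, t = 800γ¹²s) with ratio β/α ≤ γ, the modified
iterative hard thresholding sequence started at X₀ = 0 applied to y = 𝓐(X) + e satisfies,
for every best rank-r approximation X_r of X,
‖X_r − Xₙ‖_F ≤ ρⁿ‖X_r‖_F + d‖𝓐(X − X_r) + e‖₁ for all n, where
ρ := 1 − (3 − 2√2)/(10γ²), ρ' := 1 + √(8r/(s+r)), d := 960ρ'γ¹⁰/((3 − 2√2)β);
consequently every cluster point X♯ of (Xₙ) satisfies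
‖X_r − X♯‖_F ≤ d‖𝓐(X − X_r) + e‖₁. -/
theorem stmt1 {N₁ N₂ m : ℕ} (hN₁ : 0 < N₁) (hN₂ : 0 < N₂) (hm : 0 < m)
    (r s t : ℕ) (hr : 0 < r) (γ : ℝ) (hγ : 1 ≤ γ)
    (hs : (s : ℝ) = 100 * γ ^ 4 * r) (ht : (t : ℝ) = 800 * γ ^ 12 * s)
    (hdim : t + s + r ≤ min N₁ N₂)
    (A : Matrix (Fin N₁) (Fin N₂) ℝ →ₗ[ℝ] (Fin m → ℝ))
    (Astar : (Fin m → ℝ) →ₗ[ℝ] Matrix (Fin N₁) (Fin N₂) ℝ)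
    (hadj : ∀ (u : Fin m → ℝ) (Z : Matrix (Fin N₁) (Fin N₂) ℝ),
      frobInner (Astar u) Z = ∑ i, u i * A Z i)
    (α β : ℝ) (hα : 0 < α) (hαβ : α ≤ β) (hratio : β / α ≤ γ)
    (hRIP : ∀ Z : Matrix (Fin N₁) (Fin N₂) ℝ, Z.rank ≤ t + s + r →
      α * frobNorm Z ≤ l1norm (A Z) ∧ l1norm (A Z) ≤ β * frobNorm Z)
    (X : Matrix (Fin N₁) (Fin N₂) ℝ) (e : Fin m → ℝ)
    (y : Fin m → ℝ) (hy : y = A X + e)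
    (Xseq : ℕ → Matrix (Fin N₁) (Fin N₂) ℝ) (h0 : Xseq 0 = 0)
    (hstep : ∀ n : ℕ, ∃ W : Matrix (Fin N₁) (Fin N₂) ℝ,
      IsBestRankApprox t (Astar (sgnVec (y - A (Xseq n)))) W ∧
      IsBestRankApprox s
        (Xseq n +
          (if W ≠ 0 then
            l1norm (y - A (Xseq n)) /
              max (frobNorm W ^ 2) ((1 / (4 * γ ^ 2)) * l1norm (A W) ^ 2 / frobNorm W ^ 2)
          else 0) • W)
        (Xseq (n + 1)))
    (Xr : Matrix (Fin N₁) (Fin N₂) ℝ) (hXr : IsBestRankApprox r X Xr) :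
    (∀ n : ℕ, frobNorm (Xr - Xseq n) ≤
        (1 - (3 - 2 * Real.sqrt 2) / (10 * γ ^ 2)) ^ n * frobNorm Xr +
          (960 * (1 + Real.sqrt (8 * (r : ℝ) / ((s : ℝ) + (r : ℝ)))) * γ ^ 10 /
              ((3 - 2 * Real.sqrt 2) * β)) *
            l1norm (A (X - Xr) + e)) ∧
      ∀ Xsharp : Matrix (Fin N₁) (Fin N₂) ℝ, MapClusterPt Xsharp Filter.atTop Xseq →
        frobNorm (Xr - Xsharp) ≤
          (960 * (1 + Real.sqrt (8 * (r : ℝ) / ((s : ℝ) + (r : ℝ)))) * γ ^ 10 /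
              ((3 - 2 * Real.sqrt 2) * β)) *
            l1norm (A (X - Xr) + e) := by
  have hresidual : A (X - Xr) + e = y - A Xr := by rw [hy, map_sub]; abel
  simpa only [h0, sub_zero, hresidual] using
    stmt1_general (A := A) (t := t) hr hγ hs.ge
      (miht_truncation_rank_ge hγ r.cast_nonneg hs ht) hα (hα.trans_le hαβ) hratio
      (ModifiedRIP.mono (l := t + s + r) hRIP (by lia) le_rfl) hadj y (by simp [h0]) hstep hXr.1
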